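/- Let H : ℝ³∖{0} → ℝ be smooth and homogeneous of degree 0, and define F : ℝ³∖{0} → ℝ by F(v) := ‖v‖ · H(v/‖v‖) (so F(v) = ‖v‖·H(v) by homogeneity). Then for every θ ∈ (0,π) and φ, the gradient of F at the point ℓ(θ,φ) equals the surface point x(θ,φ) = H ℓ + (ð̄H) m + (ðH) conj(m); that is, the surface with stutzfunction H is parametrised by the gradient of the degree-1 homogeneous extension of H evaluated on the unit sphere. -/

import Mathlib

noncomputable section

/-- The unit radial vector `ℓ(θ,φ) = (sinθ cosφ, sinθ sinφ, cosθ)` as a point of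
Euclidean `ℝ³`. -/
def sphL (θ φ : ℝ) : EuclideanSpace ℝ (Fin 3) :=
  (WithLp.equiv 2 (Fin 3 → ℝ)).symm
    ![Real.sin θ * Real.cos φ, Real.sin θ * Real.sin φ, Real.cos θ]

/-- The complex vector `m(θ,φ) = (1/√2)(cosθcosφ − i sinφ, cosθsinφ + i cosφ, −sinθ)`. -/
def sphM (θ φ : ℝ) : Fin 3 → ℂ :=
  ![(Real.sqrt 2 : ℂ)⁻¹ *
      (Complex.ofReal (Real.cos θ * Real.cos φ) - Complex.I * Complex.ofReal (Real.sin φ)),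
    (Real.sqrt 2 : ℂ)⁻¹ *
      (Complex.ofReal (Real.cos θ * Real.sin φ) + Complex.I * Complex.ofReal (Real.cos φ)),
    (Real.sqrt 2 : ℂ)⁻¹ * (-Complex.ofReal (Real.sin θ))]

/-- The Newman–Penrose operator `ð` on a spin-weight `s` function. -/
def eth (s : ℤ) (η : ℝ → ℝ → ℂ) (θ φ : ℝ) : ℂ :=
  (Real.sqrt 2 : ℂ)⁻¹ * (Real.sin θ : ℂ) ^ s *
    (deriv (fun t => (Real.sin t : ℂ) ^ (-s) * η t φ) θ +
      Complex.I / (Real.sin θ : ℂ) * deriv (fun p => (Real.sin θ : ℂ) ^ (-s) * η θ p) φ)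

/-- The operator `ð̄` on a spin-weight `s` function. -/
def ethbar (s : ℤ) (η : ℝ → ℝ → ℂ) (θ φ : ℝ) : ℂ :=
  (Real.sqrt 2 : ℂ)⁻¹ * (Real.sin θ : ℂ) ^ (-s) *
    (deriv (fun t => (Real.sin t : ℂ) ^ s * η t φ) θ -
      Complex.I / (Real.sin θ : ℂ) * deriv (fun p => (Real.sin θ : ℂ) ^ s * η θ p) φ)

/-- The stutzfunction in spherical coordinates, as a complex-valued function. -/
def HC (H : EuclideanSpace ℝ (Fin 3) → ℝ) (θ φ : ℝ) : ℂ := (H (sphL θ φ) : ℂ)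

/-- The surface point `x(θ,φ) = H ℓ + (ð̄H) m + (ðH) conj(m)` (a real vector), as a point of
Euclidean `ℝ³`. -/
def surf (H : EuclideanSpace ℝ (Fin 3) → ℝ) (θ φ : ℝ) : EuclideanSpace ℝ (Fin 3) :=
  (WithLp.equiv 2 (Fin 3 → ℝ)).symm fun i =>
    (HC H θ φ * ((sphL θ φ) i : ℂ) + ethbar 0 (HC H) θ φ * sphM θ φ i +
      eth 0 (HC H) θ φ * (starRingEnd ℂ) (sphM θ φ i)).re

theorem aux_norm (x : EuclideanSpace ℝ (Fin 3)) (hx : ‖x‖ = 1) :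
    HasFDerivAt (fun v : EuclideanSpace ℝ (Fin 3) => ‖v‖) (innerSL ℝ x) x := by
  have h := (hasStrictFDerivAt_norm_sq x).hasFDerivAt.sqrt (by simp [hx])
  have e : (fun v : EuclideanSpace ℝ (Fin 3) => ‖v‖) = fun v => Real.sqrt (‖v‖ ^ 2) := by
    funext v
    rw [Real.sqrt_sq (norm_nonneg v)]
  rw [e]
  refine h.congr_fderiv ?_
  rw [hx]
  refine ContinuousLinearMap.ext fun w => ?_
  simp

theorem aux_sphL_norm (θ φ : ℝ) : ‖sphL θ φ‖ = 1 := by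
  rw [EuclideanSpace.norm_eq, Real.sqrt_eq_one]
  simp [sphL, Fin.sum_univ_three]
  nlinarith [Real.sin_sq_add_cos_sq θ, Real.sin_sq_add_cos_sq φ]

theorem aux_dθ (θ φ : ℝ) : HasDerivAt (fun t => sphL t φ)
    ((WithLp.equiv 2 (Fin 3 → ℝ)).symm
      ![Real.cos θ * Real.cos φ, Real.cos θ * Real.sin φ, -Real.sin θ]) θ := by
  refine (PiLp.continuousLinearEquiv 2 ℝ (fun _ : Fin 3 => ℝ)).symm.hasFDerivAt.comp_hasDerivAt _ ?_
  rw [hasDerivAt_pi]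
  intro i
  fin_cases i
  · simpa [sphL] using (Real.hasDerivAt_sin θ).mul_const (Real.cos φ)
  · simpa [sphL] using (Real.hasDerivAt_sin θ).mul_const (Real.sin φ)
  · simpa [sphL] using (Real.hasDerivAt_cos θ)

theorem aux_dφ (θ φ : ℝ) : HasDerivAt (fun p => sphL θ p)
    ((WithLp.equiv 2 (Fin 3 → ℝ)).symm
      ![-(Real.sin θ * Real.sin φ), Real.sin θ * Real.cos φ, 0]) φ := by
  refine (PiLp.continuousLinearEquiv 2 ℝ (fun _ : Fin 3 => ℝ)).symm.hasFDerivAt.comp_hasDerivAt _ ?_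
  rw [hasDerivAt_pi]
  intro i
  fin_cases i
  · simpa [sphL] using (Real.hasDerivAt_cos φ).const_mul (Real.sin θ)
  · simpa [sphL] using (Real.hasDerivAt_sin φ).const_mul (Real.sin θ)
  · simpa [sphL] using (hasDerivAt_const φ (Real.cos θ))

theorem aux_lin (D : EuclideanSpace ℝ (Fin 3) →L[ℝ] ℝ) (w : EuclideanSpace ℝ (Fin 3)) :
    D w = w 0 * D (EuclideanSpace.single 0 1) + w 1 * D (EuclideanSpace.single 1 1)
      + w 2 * D (EuclideanSpace.single 2 1) := by
  have : w = w 0 • EuclideanSpace.single 0 (1:ℝ) + w 1 • EuclideanSpace.single 1 (1:ℝ)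
      + w 2 • EuclideanSpace.single 2 (1:ℝ) := by
    ext i
    fin_cases i <;> simp
  conv_lhs => rw [this]
  simp only [map_add, map_smul, smul_eq_mul]

/-- The surface with stutzfunction `H` is parametrised by the gradient of the degree-1
homogeneous extension `F(v) = ‖v‖·H(v/‖v‖)` evaluated on the unit sphere:
`∇F(ℓ(θ,φ)) = x(θ,φ) = H ℓ + (ð̄H) m + (ðH) conj(m)`. -/
theorem stmt9 (H : EuclideanSpace ℝ (Fin 3) → ℝ)
    (hH : ContDiffOn ℝ (⊤ : ℕ∞) H {v : EuclideanSpace ℝ (Fin 3) | v ≠ 0})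
    (hhom : ∀ v : EuclideanSpace ℝ (Fin 3), v ≠ 0 → ∀ t : ℝ, 0 < t → H (t • v) = H v)
    (F : EuclideanSpace ℝ (Fin 3) → ℝ)
    (hF : F = fun v => ‖v‖ * H (‖v‖⁻¹ • v)) :
    ∀ θ ∈ Set.Ioo 0 Real.pi, ∀ φ : ℝ,
      gradient F (sphL θ φ) = surf H θ φ := by
  intro θ hθ φ
  have hs : Real.sin θ ≠ 0 := (Real.sin_pos_of_mem_Ioo hθ).ne'
  have hn := aux_sphL_norm θ φ
  have hne : sphL θ φ ≠ 0 := by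
    intro h
    rw [h] at hn
    simp at hn
  have hopen : {v : EuclideanSpace ℝ (Fin 3) | v ≠ 0} ∈ nhds (sphL θ φ) :=
    isOpen_ne.mem_nhds hne
  have hD : HasFDerivAt H (fderiv ℝ H (sphL θ φ)) (sphL θ φ) :=
    ((hH.contDiffAt hopen).differentiableAt (by simp)).hasFDerivAt
  set D := fderiv ℝ H (sphL θ φ) with hDdef
  have h0 : D (sphL θ φ) = 0 := by
    have h1 : HasDerivAt (fun t : ℝ => t • sphL θ φ) (sphL θ φ) 1 := by
      simpa using (hasDerivAt_id (1:ℝ)).smul_const (sphL θ φ)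
    have h2 : HasDerivAt (fun t : ℝ => H (t • sphL θ φ)) (D (sphL θ φ)) 1 :=
      HasFDerivAt.comp_hasDerivAt (f := fun t : ℝ => t • sphL θ φ) 1 (by simpa using hD) h1
    have h3 : HasDerivAt (fun t : ℝ => H (t • sphL θ φ)) 0 1 := by
      refine (hasDerivAt_const (1:ℝ) (H (sphL θ φ))).congr_of_eventuallyEq ?_
      filter_upwards [lt_mem_nhds (zero_lt_one' ℝ)] with t ht
      exact hhom _ hne t ht
    exact h2.unique h3
  have hA := (hD.comp_hasDerivAt (f := fun t => sphL t φ) θ (aux_dθ θ φ)).ofReal_comp.deriv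
  have hB := (hD.comp_hasDerivAt (f := fun p => sphL θ p) φ (aux_dφ θ φ)).ofReal_comp.deriv
  have hFD : HasFDerivAt F (‖sphL θ φ‖ • D + H (sphL θ φ) • innerSL ℝ (sphL θ φ)) (sphL θ φ) := by
    refine ((aux_norm _ hn).mul hD).congr_of_eventuallyEq ?_
    filter_upwards [hopen] with v hv
    rw [hF]
    simp only [Pi.mul_apply]
    rw [hhom v hv _ (inv_pos.2 (norm_pos_iff.2 hv))]
  have key : HasGradientAt F (surf H θ φ) (sphL θ φ) := by
    rw [hasGradientAt_iff_hasFDerivAt]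
    refine hFD.congr_fderiv ?_
    have hA' : deriv (fun t => HC H t φ) θ = _ := hA
    have hB' : deriv (fun p => HC H θ p) φ = _ := hB
    rw [aux_lin] at h0 hA' hB'
    refine ContinuousLinearMap.ext fun w => ?_
    rw [hn]
    simp only [one_smul, ContinuousLinearMap.add_apply, ContinuousLinearMap.smul_apply]
    rw [aux_lin D w]
    generalize D (EuclideanSpace.single 0 1) = d0 at *
    generalize D (EuclideanSpace.single 1 1) = d1 at *
    generalize D (EuclideanSpace.single 2 1) = d2 at *
    have h2 : (Real.sqrt 2)⁻¹ * (Real.sqrt 2)⁻¹ = 1 / 2 := by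
      rw [← mul_inv, Real.mul_self_sqrt (by norm_num)]; norm_num
    have hre : ∀ i, surf H θ φ i = H (sphL θ φ) * sphL θ φ i
      + (![Real.cos θ * Real.cos φ, Real.cos θ * Real.sin φ, -Real.sin θ] i)
        * (Real.cos θ * Real.cos φ * d0 + Real.cos θ * Real.sin φ * d1 - Real.sin θ * d2)
      + (![-Real.sin φ, Real.cos φ, 0] i) * (-Real.sin φ * d0 + Real.cos φ * d1) := by
      intro i
      have e1 : eth 0 (HC H) θ φ = ((Real.sqrt 2)⁻¹ : ℝ) *
          (((Real.cos θ * Real.cos φ * d0 + Real.cos θ * Real.sin φ * d1 - Real.sin θ * d2 : ℝ) : ℂ)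
            + Complex.I * ((-Real.sin φ * d0 + Real.cos φ * d1 : ℝ) : ℂ)) := by
        have hsc : (Real.sin θ : ℂ) ≠ 0 := Complex.ofReal_ne_zero.2 hs
        simp only [eth, neg_zero, zpow_zero, one_mul, mul_one]
        rw [hA', hB']
        simp only [WithLp.equiv_symm_apply, Matrix.cons_val]
        push_cast at hsc ⊢
        field_simp
        ring
      have e2 : ethbar 0 (HC H) θ φ = ((Real.sqrt 2)⁻¹ : ℝ) *
          (((Real.cos θ * Real.cos φ * d0 + Real.cos θ * Real.sin φ * d1 - Real.sin θ * d2 : ℝ) : ℂ)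
            - Complex.I * ((-Real.sin φ * d0 + Real.cos φ * d1 : ℝ) : ℂ)) := by
        have hsc : (Real.sin θ : ℂ) ≠ 0 := Complex.ofReal_ne_zero.2 hs
        simp only [ethbar, neg_zero, zpow_zero, one_mul, mul_one]
        rw [hA', hB']
        simp only [WithLp.equiv_symm_apply, Matrix.cons_val]
        push_cast at hsc ⊢
        field_simp
        ring
      simp only [surf, WithLp.equiv_symm_apply]
      rw [e1, e2]
      generalize (Real.cos θ * Real.cos φ * d0 + Real.cos θ * Real.sin φ * d1 - Real.sin θ * d2) = A
      generalize (-Real.sin φ * d0 + Real.cos φ * d1) = B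
      have hr : (Real.sqrt 2 : ℂ)⁻¹ = (((Real.sqrt 2)⁻¹ : ℝ) : ℂ) := by push_cast; rfl
      simp only [sphM, hr, HC]
      generalize (Real.sqrt 2)⁻¹ = r at *
      generalize sphL θ φ = L at *
      generalize Real.cos θ = ct at *
      generalize Real.sin θ = st at *
      generalize Real.cos φ = cp at *
      generalize Real.sin φ = sp at *
      fin_cases i
      · simp
        linear_combination (2 * ct * cp * A - 2 * sp * B) * h2
      · simp
        linear_combination (2 * ct * sp * A + 2 * cp * B) * h2
      · simp
        linear_combination (- 2 * st * A) * h2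
    have T := Real.sin_sq_add_cos_sq θ
    have P := Real.sin_sq_add_cos_sq φ
    simp only [InnerProductSpace.toDual_apply_apply, innerSL_apply_apply, PiLp.inner_apply,
      Fin.sum_univ_three, RCLike.inner_apply, conj_trivial, hre, smul_eq_mul]
    simp [sphL] at h0 ⊢
    generalize Real.cos θ = ct at *
    generalize Real.sin θ = st at *
    generalize Real.cos φ = cp at *
    generalize Real.sin φ = sp at *
    linear_combination w 0 * (st * cp * h0 - (d0 * cp ^ 2 + d1 * cp * sp) * T - d0 * P)
      + w 1 * (st * sp * h0 - (d1 * sp ^ 2 + d0 * cp * sp) * T - d1 * P)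
      + w 2 * (ct * h0 - d2 * T)
  exact key.gradient
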